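/- arXiv:2404.16231 — 2 statements merged into one kernel-verified Lean document; each statement's English description precedes it below -/
import Mathlib

section
/- Completeness of non-wellfounded μHKA: if L(Γ) ⊆ L(S), then the hypersequent Γ → S has a progressing non-wellfounded proof in μHKA, i.e., μHKA ⊢∞ Γ → S. -/
/-!
Completeness holds for a simple reason: a progressing proof may work on the left-hand side alone
until it has become a word.

Starting from a valid sequent with closed left-hand side, left rules are applied as long as the
left cedent contains an expression that is not a letter. Left rules are invertible for the
language semantics, so validity is preserved, and every left rule other than `μ-l` shrinks
the cedent; hence between two `μ-l` steps there are only finitely many others. Once the left cedent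
is a word `w`, validity gives a cedent `Δ` on the right with `w ∈ L(Δ)`; weakening to `Δ` and
following a parse of `w` with right rules reaches `w → w`, which is closed by `k`-rules and `init`.

The two halves are `langCed_parse` (the finite right-hand phase, by fixed point induction on the
semantics) and `exists_segment` (every valid sequent has a finite derivation segment whose open
leaves are valid premisses of `μ-l`). `proofInf_of_segment` glues the segments into one infinite
tree, where the height of the current segment bounds the distance to the next `μ-l` step.
-/

namespace CFPT

/-- `μ`-expressions over alphabet `α`, with de Bruijn indices for variables. -/
inductive Exp (α : Type) : Type
  | zero : Exp α
  | one : Exp α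
  | var (n : ℕ) : Exp α
  | tok (a : α) : Exp α
  | plus (e f : Exp α) : Exp α
  | times (e f : Exp α) : Exp α
  | mu (e : Exp α) : Exp α
  deriving DecidableEq

namespace Exp

variable {α : Type}

/-- all de Bruijn indices are `< k` -/
def ClosedUnder : ℕ → Exp α → Prop
  | _, zero => True
  | _, one => True
  | k, var n => n < k
  | _, tok _ => True
  | k, plus e f => ClosedUnder k e ∧ ClosedUnder k f
  | k, times e f => ClosedUnder k e ∧ ClosedUnder k f
  | k, mu e => ClosedUnder (k + 1) e

def Closed (e : Exp α) : Prop := ClosedUnder 0 e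

/-- substitute the closed expression `g` for de Bruijn variable `d`. -/
def subst (g : Exp α) : ℕ → Exp α → Exp α
  | _, zero => zero
  | _, one => one
  | d, var n => if n = d then g else var n
  | _, tok a => tok a
  | d, plus e f => plus (subst g d e) (subst g d f)
  | d, times e f => times (subst g d e) (subst g d f)
  | d, mu e => mu (subst g (d + 1) e)

/-- the unfolding `e(μX e)` of the fixed point `μX e` (given by its body `e`). -/
def unfold (e : Exp α) : Exp α := subst (mu e) 0 e

/-- the approximants `e^n(0)` of `μX e` (given by its body `e`):
`e^0(0) = 0` and `e^(n+1)(0) = e(e^n(0))`. -/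
def iter (e : Exp α) : ℕ → Exp α
  | 0 => zero
  | n + 1 => subst (iter e n) 0 e

/-- left-productive expressions: `p ::= a | p+q | p·e | μX p` -/
inductive LeftProductive : Exp α → Prop
  | tok (a : α) : LeftProductive (tok a)
  | plus {p q} : LeftProductive p → LeftProductive q → LeftProductive (plus p q)
  | times {p} (e) : LeftProductive p → LeftProductive (times p e)
  | mu {p} : LeftProductive p → LeftProductive (mu p)

/-- productive expressions: `p ::= a | p+q | p·e | e·p | μX p` -/
inductive Productive : Exp α → Prop
  | tok (a : α) : Productive (tok a)
  | plus {p q} : Productive p → Productive q → Productive (plus p q)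
  | timesL {p} (e) : Productive p → Productive (times p e)
  | timesR {p} (e) : Productive p → Productive (times e p)
  | mu {p} : Productive p → Productive (mu p)

/-- every free occurrence of variable `n` in the expression occurs inside a
subexpression (in which it remains free) satisfying `P`. -/
def GuardVar (P : Exp α → Prop) : ℕ → Exp α → Prop
  | _, zero => True
  | _, one => True
  | _, tok _ => True
  | n, var m => P (var m) ∨ m ≠ n
  | n, plus e f => P (plus e f) ∨ (GuardVar P n e ∧ GuardVar P n f)
  | n, times e f => P (times e f) ∨ (GuardVar P n e ∧ GuardVar P n f)
  | n, mu e => P (mu e) ∨ GuardVar P (n + 1) e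

/-- each variable occurrence occurs free in a subexpression satisfying `P`. -/
def GuardedBy (P : Exp α → Prop) : Exp α → Prop
  | zero => True
  | one => True
  | var _ => True
  | tok _ => True
  | plus e f => GuardedBy P e ∧ GuardedBy P f
  | times e f => GuardedBy P e ∧ GuardedBy P f
  | mu e => GuardVar P 0 e ∧ GuardedBy P e

/-- each variable occurrence occurs free in a productive subexpression. -/
def Guarded (e : Exp α) : Prop := GuardedBy Productive e

/-- each variable occurrence occurs free in a left-productive subexpression. -/
def LeftGuarded (e : Exp α) : Prop := GuardedBy LeftProductive e

end Exp

/-- extend an environment by a new language for variable `0`. -/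
def consEnv {α} (A : Language α) (ρ : ℕ → Language α) : ℕ → Language α
  | 0 => A
  | n + 1 => ρ n

/-- language semantics of `μ`-expressions, relative to an environment;
`μX e` denotes the least fixed point of `A ↦ ⟦e⟧(A)` (Knaster–Tarski). -/
def sem {α} (ρ : ℕ → Language α) : Exp α → Language α
  | .zero => 0
  | .one => 1
  | .var n => ρ n
  | .tok a => {[a]}
  | .plus e f => sem ρ e + sem ρ f
  | .times e f => sem ρ e * sem ρ f
  | .mu e => sInf {A : Language α | sem (consEnv A ρ) e ≤ A}

/-- the language of a (closed) expression. -/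
def langOf {α} (e : Exp α) : Language α := sem (fun _ => 0) e

/-- a cedent: a finite list of expressions. -/
abbrev Cedent (α : Type) := List (Exp α)

/-- language of a cedent: the concatenation (product) of its members' languages. -/
def langCed {α} (Γ : Cedent α) : Language α := (Γ.map langOf).prod

/-- right-hand side of a hypersequent: a finite set of cedents. -/
abbrev RHSet (α : Type) := Finset (Cedent α)

/-- language of a RHS: the union (sum) of the languages of its cedents. -/
def langRHS {α} (S : RHSet α) : Language α := S.sup langCed

def CedClosed {α} (Γ : Cedent α) : Prop := ∀ e ∈ Γ, e.Closed
def CedGuarded {α} (Γ : Cedent α) : Prop := ∀ e ∈ Γ, e.Guarded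

/-- a hypersequent `Γ → S`. -/
structure Sqt (α : Type) : Type where
  lhs : Cedent α
  rhs : RHSet α

/-- validity of a hypersequent in the language model. -/
def Sqt.Valid {α} (s : Sqt α) : Prop := langCed s.lhs ≤ langRHS s.rhs

def Sqt.ClosedSeq {α} (s : Sqt α) : Prop :=
  CedClosed s.lhs ∧ ∀ Δ ∈ s.rhs, CedClosed Δ

def Sqt.GuardedSeq {α} (s : Sqt α) : Prop :=
  CedGuarded s.lhs ∧ ∀ Δ ∈ s.rhs, CedGuarded Δ

/-- rule instances of the hypersequential system `μHKA`. -/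
inductive Rule (α : Type) : Type
  | init : Rule α
  | wr (Γ : Cedent α) (S : RHSet α) (Δ : Cedent α) : Rule α
  | kl (a : α) (Γ : Cedent α) (S : RHSet α) : Rule α
  | kr (a : α) (Γ : Cedent α) (S : RHSet α) : Rule α
  | zeroL (Γ Γ' : Cedent α) (S : RHSet α) : Rule α
  | oneL (Γ Γ' : Cedent α) (S : RHSet α) : Rule α
  | timesL (Γ : Cedent α) (e f : Exp α) (Γ' : Cedent α) (S : RHSet α) : Rule α
  | plusL (Γ : Cedent α) (e f : Exp α) (Γ' : Cedent α) (S : RHSet α) : Rule α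
  | muL (Γ : Cedent α) (e : Exp α) (Γ' : Cedent α) (S : RHSet α) : Rule α
  | zeroR (Γ : Cedent α) (S : RHSet α) (Δ Δ' : Cedent α) : Rule α
  | oneR (Γ : Cedent α) (S : RHSet α) (Δ Δ' : Cedent α) : Rule α
  | timesR (Γ : Cedent α) (S : RHSet α) (Δ : Cedent α) (e f : Exp α) (Δ' : Cedent α) : Rule α
  | plusR (Γ : Cedent α) (S : RHSet α) (Δ : Cedent α) (e f : Exp α) (Δ' : Cedent α) : Rule α
  | muR (Γ : Cedent α) (S : RHSet α) (Δ : Cedent α) (e : Exp α) (Δ' : Cedent α) : Rule α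

namespace Rule

variable {α : Type} [DecidableEq α]

/-- conclusion of a rule instance. -/
def concl : Rule α → Sqt α
  | init => ⟨[], {[]}⟩
  | wr Γ S Δ => ⟨Γ, insert Δ S⟩
  | kl a Γ S => ⟨.tok a :: Γ, S.image (Exp.tok a :: ·)⟩
  | kr a Γ S => ⟨Γ ++ [.tok a], S.image (· ++ [Exp.tok a])⟩
  | zeroL Γ Γ' S => ⟨Γ ++ .zero :: Γ', S⟩
  | oneL Γ Γ' S => ⟨Γ ++ .one :: Γ', S⟩
  | timesL Γ e f Γ' S => ⟨Γ ++ .times e f :: Γ', S⟩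
  | plusL Γ e f Γ' S => ⟨Γ ++ .plus e f :: Γ', S⟩
  | muL Γ e Γ' S => ⟨Γ ++ .mu e :: Γ', S⟩
  | zeroR Γ S Δ Δ' => ⟨Γ, insert (Δ ++ .zero :: Δ') S⟩
  | oneR Γ S Δ Δ' => ⟨Γ, insert (Δ ++ .one :: Δ') S⟩
  | timesR Γ S Δ e f Δ' => ⟨Γ, insert (Δ ++ .times e f :: Δ') S⟩
  | plusR Γ S Δ e f Δ' => ⟨Γ, insert (Δ ++ .plus e f :: Δ') S⟩
  | muR Γ S Δ e Δ' => ⟨Γ, insert (Δ ++ .mu e :: Δ') S⟩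

/-- list of premisses of a rule instance. -/
def prems : Rule α → List (Sqt α)
  | init => []
  | wr Γ S _ => [⟨Γ, S⟩]
  | kl _ Γ S => [⟨Γ, S⟩]
  | kr _ Γ S => [⟨Γ, S⟩]
  | zeroL _ _ _ => []
  | oneL Γ Γ' S => [⟨Γ ++ Γ', S⟩]
  | timesL Γ e f Γ' S => [⟨Γ ++ e :: f :: Γ', S⟩]
  | plusL Γ e f Γ' S => [⟨Γ ++ e :: Γ', S⟩, ⟨Γ ++ f :: Γ', S⟩]
  | muL Γ e Γ' S => [⟨Γ ++ e.unfold :: Γ', S⟩]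
  | zeroR Γ S _ _ => [⟨Γ, S⟩]
  | oneR Γ S Δ Δ' => [⟨Γ, insert (Δ ++ Δ') S⟩]
  | timesR Γ S Δ e f Δ' => [⟨Γ, insert (Δ ++ e :: f :: Δ') S⟩]
  | plusR Γ S Δ e f Δ' => [⟨Γ, insert (Δ ++ e :: Δ') (insert (Δ ++ f :: Δ') S)⟩]
  | muR Γ S Δ e Δ' => [⟨Γ, insert (Δ ++ e.unfold :: Δ') S⟩]

/-- the rule is an instance of `μ-l`. -/
def IsMuL : Rule α → Prop
  | muL _ _ _ _ => True
  | _ => False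

/-- logical rules (neither `init`, weakening, nor `k` rules). -/
def IsLogical : Rule α → Prop
  | init => False
  | wr _ _ _ => False
  | kl _ _ _ => False
  | kr _ _ _ => False
  | _ => True

/-- immediate ancestry on the LHS: the formula at position `j` of the LHS of a
premiss is the immediate ancestor of the formula at position `ancL r j` of the
LHS of the conclusion. -/
def ancL : Rule α → ℕ → ℕ
  | kl _ _ _ => fun j => j + 1
  | oneL Γ _ _ => fun j => if j < Γ.length then j else j + 1
  | timesL Γ _ _ _ _ => fun j =>
      if j < Γ.length then j else if j ≤ Γ.length + 1 then Γ.length else j - 1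
  | _ => fun j => j

/-- position `j` of the LHS of the conclusion is principal for a `μ-l` step. -/
def IsPrincMuL : Rule α → ℕ → Prop
  | muL Γ _ _ _, j => j = Γ.length
  | _, _ => False

end Rule

/-- a (non-wellfounded) preproof of `μHKA`: a possibly infinite tree of rule
instances, represented by its labelling of tree positions. -/
structure Preproof (α : Type) [DecidableEq α] : Type where
  rule : List ℕ → Option (Rule α)
  root_isSome : (rule []).isSome
  children_concl : ∀ p r, rule p = some r → ∀ (i : ℕ) (h : i < r.prems.length),
    ∃ r', rule (p ++ [i]) = some r' ∧ r'.concl = r.prems.get ⟨i, h⟩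
  children_none : ∀ p r, rule p = some r → ∀ i : ℕ, r.prems.length ≤ i → rule (p ++ [i]) = none
  grounded : ∀ p i, (rule (p ++ [i])).isSome → (rule p).isSome

namespace Preproof

variable {α : Type} [DecidableEq α]

/-- the preproof has endsequent `s`. -/
def Concl (P : Preproof α) (s : Sqt α) : Prop :=
  ∃ r, P.rule [] = some r ∧ r.concl = s

/-- the node of a branch `b` at depth `n`. -/
def pathOf (b : ℕ → ℕ) (n : ℕ) : List ℕ := (List.range n).map b

/-- `b` describes an infinite branch of `P`. -/
def IsBranch (P : Preproof α) (b : ℕ → ℕ) : Prop :=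
  ∀ n, (P.rule (pathOf b n)).isSome

/-- `P` is progressing: every infinite branch has infinitely many `μ-l` steps. -/
def Progressing (P : Preproof α) : Prop :=
  ∀ b, P.IsBranch b → ∀ N, ∃ n, N ≤ n ∧ ∃ r, P.rule (pathOf b n) = some r ∧ r.IsMuL

end Preproof

/-- `μHKA ⊢∞ s` : the hypersequent `s` has a progressing non-wellfounded
(`∞`-)proof in `μHKA`. -/
def ProofInf {α : Type} [DecidableEq α] (s : Sqt α) : Prop :=
  ∃ P : Preproof α, P.Concl s ∧ P.Progressing

/-- wellfounded (possibly infinitely branching) derivability in `μHKA_ω`,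
the extension of `μHKA` by the `ω`-rule. -/
inductive DerivW {α : Type} [DecidableEq α] : Sqt α → Prop
  | rule (r : Rule α) : (∀ s ∈ r.prems, DerivW s) → DerivW r.concl
  | omega (Γ : Cedent α) (e : Exp α) (Γ' : Cedent α) (S : RHSet α) :
      (∀ n : ℕ, DerivW ⟨Γ ++ Exp.iter e n :: Γ', S⟩) → DerivW ⟨Γ ++ .mu e :: Γ', S⟩

/-- the equational theory `μCA` of `μ`-continuous Chomsky algebras:
idempotent semiring (dioid) axioms together with `μ`-continuity. -/
inductive CA {α : Type} : Exp α → Exp α → Prop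
  | refl (e) : CA e e
  | symm {e f} : CA e f → CA f e
  | trans {e f g} : CA e f → CA f g → CA e g
  | congPlus {e e' f f'} : CA e e' → CA f f' → CA (.plus e f) (.plus e' f')
  | congTimes {e e' f f'} : CA e e' → CA f f' → CA (.times e f) (.times e' f')
  | plusAssoc (e f g) : CA (.plus (.plus e f) g) (.plus e (.plus f g))
  | plusComm (e f) : CA (.plus e f) (.plus f e)
  | plusIdem (e) : CA (.plus e e) e
  | plusZero (e) : CA (.plus e .zero) e
  | timesAssoc (e f g) : CA (.times (.times e f) g) (.times e (.times f g))
  | timesOne (e) : CA (.times e .one) e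
  | oneTimes (e) : CA (.times .one e) e
  | timesZero (e) : CA (.times e .zero) .zero
  | zeroTimes (e) : CA (.times .zero e) .zero
  | distL (e f g) : CA (.times e (.plus f g)) (.plus (.times e f) (.times e g))
  | distR (e f g) : CA (.times (.plus e f) g) (.plus (.times e g) (.times f g))
  | muContLe (e f g : Exp α) (n : ℕ) :
      CA (.plus (.times e (.times (Exp.iter f n) g)) (.times e (.times (.mu f) g)))
         (.times e (.times (.mu f) g))
  | muContSup (e f g h : Exp α) :
      (∀ n : ℕ, CA (.plus (.times e (.times (Exp.iter f n) g)) h) h) →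
      CA (.plus (.times e (.times (.mu f) g)) h) h

/-- the natural order `e ≤ f` of `μCA`, i.e. `e + f = f`. -/
def CAle {α : Type} (e f : Exp α) : Prop := CA (.plus e f) f

/-- the product `∏Γ` of a cedent as an expression. -/
def prodCed {α} (Γ : Cedent α) : Exp α := Γ.foldr .times .one

/-- the sum `Σ_{Δ∈S} ∏Δ` of a RHS as an expression. -/
noncomputable def sumRHS {α} (S : RHSet α) : Exp α := (S.toList.map prodCed).foldr .plus .zero

section Completeness

open Exp

variable {α : Type}

/-! ### Semantics of closed expressions and substitution -/

theorem ClosedUnder.mono {e : Exp α} : ∀ {k l : ℕ}, k ≤ l → e.ClosedUnder k → e.ClosedUnder l := by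
  induction e with
  | zero | one | tok => intros; trivial
  | var n => intro k l hkl h; exact lt_of_lt_of_le h hkl
  | plus e f ihe ihf | times e f ihe ihf =>
    intro k l hkl h; exact ⟨ihe hkl h.1, ihf hkl h.2⟩
  | mu e ih => intro k l hkl h; exact ih (k := k + 1) (l := l + 1) (by omega) h

theorem closedUnder_subst {g : Exp α} (hg : g.Closed) {e : Exp α} :
    ∀ {d : ℕ}, e.ClosedUnder (d + 1) → (subst g d e).ClosedUnder d := by
  induction e with
  | zero | one | tok => intros; trivial
  | var n =>
    intro d h
    have h : n < d + 1 := h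
    by_cases hn : n = d
    · simpa [subst, hn] using ClosedUnder.mono (Nat.zero_le d) hg
    · simp only [subst, hn, if_false]
      change n < d
      omega
  | plus e f ihe ihf | times e f ihe ihf => intro d h; exact ⟨ihe h.1, ihf h.2⟩
  | mu e ih => intro d h; exact ih (d := d + 1) h

theorem subst_of_closedUnder (g : Exp α) {e : Exp α} :
    ∀ {d : ℕ}, e.ClosedUnder d → subst g d e = e := by
  induction e with
  | zero | one | tok => intros; rfl
  | var n =>
    intro d h
    have h : n < d := h
    simp [subst, h.ne]
  | plus e f ihe ihf | times e f ihe ihf => intro d h; simp [subst, ihe h.1, ihf h.2]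
  | mu e ih => intro d h; simp [subst, ih (d := d + 1) h]

theorem sem_congr {e : Exp α} : ∀ {k : ℕ} {ρ ρ' : ℕ → Language α}, e.ClosedUnder k →
    (∀ n < k, ρ n = ρ' n) → sem ρ e = sem ρ' e := by
  induction e with
  | zero | one | tok => intros; rfl
  | var n => intro k ρ ρ' h hρ; exact hρ n h
  | plus e f ihe ihf | times e f ihe ihf =>
    intro k ρ ρ' h hρ; simp only [sem]; rw [ihe h.1 hρ, ihf h.2 hρ]
  | mu e ih =>
    intro k ρ ρ' h hρ
    simp only [sem]
    have : ∀ A, sem (consEnv A ρ) e = sem (consEnv A ρ') e := by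
      intro A
      refine ih (k := k + 1) h ?_
      rintro (_ | n) hn
      · rfl
      · exact hρ n (by omega)
    simp only [this]

theorem sem_mono {e : Exp α} : ∀ {ρ ρ' : ℕ → Language α},
    (∀ n, ρ n ≤ ρ' n) → sem ρ e ≤ sem ρ' e := by
  induction e with
  | zero | one | tok => intros; exact le_rfl
  | var n => intro ρ ρ' hρ; exact hρ n
  | plus e f ihe ihf => intro ρ ρ' hρ; exact add_le_add (ihe hρ) (ihf hρ)
  | times e f ihe ihf => intro ρ ρ' hρ; exact mul_le_mul' (ihe hρ) (ihf hρ)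
  | mu e ih =>
    intro ρ ρ' hρ
    refine sInf_le_sInf fun A hA => ?_
    refine le_trans (ih ?_) hA
    rintro (_ | n)
    · exact le_rfl
    · exact hρ n

theorem consEnv_update (A B : Language α) (ρ : ℕ → Language α) (d : ℕ) :
    consEnv A (Function.update ρ d B) = Function.update (consEnv A ρ) (d + 1) B := by
  funext n
  cases n with
  | zero => simp [consEnv]
  | succ n => by_cases h : n = d <;> simp [consEnv, Function.update, h]

theorem sem_subst {g : Exp α} (hg : g.Closed) {e : Exp α} : ∀ (d : ℕ) (ρ : ℕ → Language α),
    sem ρ (subst g d e) = sem (Function.update ρ d (langOf g)) e := by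
  induction e with
  | zero | one | tok => intros; rfl
  | var n =>
    intro d ρ
    by_cases hn : n = d
    · subst hn
      simpa [subst, sem, langOf] using sem_congr hg (by simp)
    · simp [subst, sem, hn]
  | plus e f ihe ihf | times e f ihe ihf => intro d ρ; simp only [subst, sem, ihe, ihf]
  | mu e ih => intro d ρ; simp only [subst, sem, ih, consEnv_update]

/-- The least fixed point is a pre-fixed point. -/
theorem langOf_unfold_le {e : Exp α} (h : (mu e).Closed) : langOf e.unfold ≤ langOf (mu e) := by
  unfold Exp.unfold
  rw [langOf, sem_subst h]
  have h1 : sem (Function.update (fun _ => 0) 0 (langOf (mu e))) e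
      = sem (consEnv (langOf (mu e)) fun _ => 0) e := by
    refine sem_congr (k := 1) h fun n hn => ?_
    obtain rfl : n = 0 := by omega
    simp [consEnv]
  rw [h1]
  refine le_sInf fun A hA => le_trans (sem_mono ?_) hA
  rintro (_ | n)
  · exact sInf_le hA
  · exact le_rfl

theorem langCed_append (Γ Δ : Cedent α) : langCed (Γ ++ Δ) = langCed Γ * langCed Δ := by
  simp [langCed]

theorem langCed_cons (e : Exp α) (Δ : Cedent α) : langCed (e :: Δ) = langOf e * langCed Δ := by
  simp [langCed]

theorem mem_langCed_word (w : List α) : w ∈ langCed (w.map tok) := by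
  induction w with
  | nil => exact Language.nil_mem_one
  | cons a w ih =>
    rw [List.map_cons, langCed_cons]
    exact ⟨[a], rfl, w, ih, rfl⟩

theorem mem_langRHS {S : RHSet α} {w : List α} (h : w ∈ langRHS S) :
    ∃ Δ ∈ S, w ∈ langCed Δ := by
  classical
  by_contra! hn
  have : langRHS S ≤ ({w}ᶜ : Set (List α)) := by
    refine Finset.sup_le fun Δ hΔ u hu hw => ?_
    obtain rfl : u = w := hw
    exact hn Δ hΔ hu
  exact this h rfl

/-- Simultaneous substitution under `k` binders: the variable `k + i` is replaced by `τ i`,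
without shifting, as the `τ i` are meant to be closed. -/
def psub (τ : ℕ → Exp α) : ℕ → Exp α → Exp α
  | _, zero => zero
  | _, one => one
  | k, var n => if n < k then var n else τ (n - k)
  | _, tok a => tok a
  | k, plus e f => plus (psub τ k e) (psub τ k f)
  | k, times e f => times (psub τ k e) (psub τ k f)
  | k, mu e => mu (psub τ (k + 1) e)

/-- Extend a substitution by a new expression for the variable `0`. -/
def consSub (g : Exp α) (τ : ℕ → Exp α) : ℕ → Exp α
  | 0 => g
  | n + 1 => τ n

theorem closedUnder_psub {τ : ℕ → Exp α} (hτ : ∀ n, (τ n).Closed) {e : Exp α} :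
    ∀ k, (psub τ k e).ClosedUnder k := by
  induction e with
  | zero | one | tok => intros; trivial
  | var n =>
    intro k
    by_cases hn : n < k
    · simp only [psub, hn, if_true]
      exact hn
    · simpa [psub, hn] using ClosedUnder.mono (Nat.zero_le k) (hτ _)
  | plus e f ihe ihf | times e f ihe ihf => intro k; exact ⟨ihe k, ihf k⟩
  | mu e ih => intro k; exact ih (k + 1)

theorem psub_of_closedUnder (τ : ℕ → Exp α) {e : Exp α} :
    ∀ {k}, e.ClosedUnder k → psub τ k e = e := by
  induction e with
  | zero | one | tok => intros; rfl
  | var n =>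
    intro k h
    have h : n < k := h
    simp [psub, h]
  | plus e f ihe ihf | times e f ihe ihf => intro k h; simp [psub, ihe h.1, ihf h.2]
  | mu e ih => intro k h; simp [psub, ih (k := k + 1) h]

theorem subst_psub (g : Exp α) {τ : ℕ → Exp α} (hτ : ∀ n, (τ n).Closed) {e : Exp α} :
    ∀ k, subst g k (psub τ (k + 1) e) = psub (consSub g τ) k e := by
  induction e with
  | zero | one | tok => intros; rfl
  | var n =>
    intro k
    rcases lt_trichotomy n k with hn | rfl | hn
    · simp [psub, subst, hn, hn.ne, Nat.lt_succ_of_lt hn]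
    · simp [psub, subst, consSub]
    · obtain ⟨m, rfl⟩ : ∃ m, n = k + 1 + m := ⟨n - (k + 1), by omega⟩
      have h1 : k + 1 + m - k = m + 1 := by omega
      have h2 : ¬ k + 1 + m < k := by omega
      simp only [psub, h1, h2, Nat.add_sub_cancel_left, consSub, if_false,
        show ¬ k + 1 + m < k + 1 by omega]
      exact subst_of_closedUnder g (ClosedUnder.mono (Nat.zero_le k) (hτ m))
  | plus e f ihe ihf | times e f ihe ihf => intro k; simp [psub, subst, ihe, ihf]
  | mu e ih => intro k; simp [psub, subst, ih]

/-! ### Good sequents and the size of the left-hand side -/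

/-- The invariant of the proof search. Closedness of the right-hand side ensures that words of its
language can be parsed by right rules. -/
def Good (s : Sqt α) : Prop := s.ClosedSeq ∧ s.Valid

/-- Number of symbols of an expression. -/
def esize : Exp α → ℕ
  | zero => 1
  | one => 1
  | var _ => 1
  | tok _ => 1
  | plus e f => esize e + esize f + 1
  | times e f => esize e + esize f + 1
  | mu e => esize e + 1

/-- Total number of symbols of a cedent. -/
def csize (Γ : Cedent α) : ℕ := (Γ.map esize).sum

theorem word_or_split (Γ : Cedent α) : (∃ w : List α, Γ = w.map tok) ∨
    ∃ Γ₁ e Γ₂, Γ = Γ₁ ++ e :: Γ₂ ∧ ∀ a, e ≠ tok a := by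
  induction Γ with
  | nil => exact .inl ⟨[], rfl⟩
  | cons e Γ ih =>
    by_cases he : ∃ a, e = tok a
    · obtain ⟨a, rfl⟩ := he
      rcases ih with ⟨w, rfl⟩ | ⟨Γ₁, e, Γ₂, rfl, h⟩
      · exact .inl ⟨a :: w, rfl⟩
      · exact .inr ⟨tok a :: Γ₁, e, Γ₂, rfl, h⟩
    · exact .inr ⟨[], e, Γ, rfl, fun a h => he ⟨a, h⟩⟩

/-- Replacing an expression on the left by a cedent with a smaller language keeps a sequent good:
the semantic content of the invertibility of the left rules. -/
theorem Good.replace {Γ₁ Γ₂ Δ : Cedent α} {e : Exp α} {S : RHSet α}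
    (h : Good ⟨Γ₁ ++ e :: Γ₂, S⟩) (hΔ : CedClosed Δ) (hl : langCed Δ ≤ langOf e) :
    Good ⟨Γ₁ ++ (Δ ++ Γ₂), S⟩ := by
  obtain ⟨⟨h1, h2⟩, h3⟩ := h
  refine ⟨⟨?_, h2⟩, ?_⟩
  · intro f hf
    simp only [List.mem_append] at hf
    rcases hf with hf | hf | hf
    · exact h1 f (by simp [hf])
    · exact hΔ f hf
    · exact h1 f (by simp [hf])
  · refine le_trans ?_ h3
    simp only [langCed_append, langCed_cons]
    exact mul_le_mul' le_rfl (mul_le_mul' hl le_rfl)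

/-! ### Derivation segments between `μ-l` steps -/

variable [DecidableEq α]

/-- `Seg n s`: there is a finite derivation of `s` each of whose branches has at most `n` steps, and
then is either closed or ends in one further step, a `μ-l` step with good premiss. -/
def Seg : ℕ → Sqt α → Prop
  | 0, s => ∃ r : Rule α, r.IsMuL ∧ r.concl = s ∧ ∀ s' ∈ r.prems, Good s'
  | n + 1, s => Seg n s ∨ ∃ r : Rule α, r.concl = s ∧ ∀ s' ∈ r.prems, Seg n s'

theorem Seg.mono {s : Sqt α} {n m : ℕ} (h : n ≤ m) (hs : Seg n s) : Seg m s := by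
  induction m, h using Nat.le_induction with
  | base => exact hs
  | succ m _ ih => exact Or.inl ih

/-- `s` has a derivation segment of some finite height. -/
def HasSeg (s : Sqt α) : Prop := ∃ n, Seg n s

theorem HasSeg.step (r : Rule α) {s : Sqt α} (hr : r.concl = s) (h : ∀ s' ∈ r.prems, HasSeg s') :
    HasSeg s := by
  have key : ∀ l : List (Sqt α), (∀ s' ∈ l, HasSeg s') → ∃ n, ∀ s' ∈ l, Seg n s' := by
    intro l
    induction l with
    | nil => intro _; exact ⟨0, by simp⟩
    | cons t l ih =>
      intro hl
      obtain ⟨n, hn⟩ := hl t (by simp)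
      obtain ⟨m, hm⟩ := ih fun s' hs' => hl s' (by simp [hs'])
      refine ⟨max n m, fun s' hs' => ?_⟩
      rcases List.mem_cons.1 hs' with rfl | hs'
      · exact hn.mono (le_max_left _ _)
      · exact (hm s' hs').mono (le_max_right _ _)
  obtain ⟨n, hn⟩ := key _ h
  exact ⟨n + 1, Or.inr ⟨r, hr, hn⟩⟩

/-! ### Parsing words on the right -/

/-- The sequent `w → Δ`, for a word `w`, has a derivation segment. -/
def Parses (w : List α) (Δ : Cedent α) : Prop := HasSeg ⟨w.map tok, {Δ}⟩

theorem parses_word (w : List α) : Parses w (w.map tok) := by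
  induction w with
  | nil => exact HasSeg.step .init rfl (by simp [Rule.prems])
  | cons a w ih =>
    refine HasSeg.step (.kl a (w.map tok) {w.map tok}) (by simp [Rule.concl]) ?_
    simpa [Rule.prems, Parses] using ih

theorem HasSeg.weaken {Γ Δ : Cedent α} {S : RHSet α} (hΔ : Δ ∈ S) (h : HasSeg ⟨Γ, {Δ}⟩) :
    HasSeg ⟨Γ, S⟩ := by
  -- All sets of the form `insert Δ T` are reached from `{Δ}` by adding one cedent at a time.
  have key : ∀ T : RHSet α, HasSeg ⟨Γ, insert Δ T⟩ := by
    intro T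
    induction T using Finset.induction_on with
    | empty => simpa using h
    | insert Δ' T _ ih =>
      refine HasSeg.step (.wr Γ (insert Δ T) Δ') ?_ (by simpa [Rule.prems] using ih)
      simp [Rule.concl, Finset.insert_comm]
  simpa [Finset.insert_eq_of_mem hΔ] using key S

/-- The words that may replace `e` in a parsed cedent, in any context: `u ∈ parseLang e` if every
derivation segment for `Δ₁, u, Δ₂` on the right extends to one for `Δ₁, e, Δ₂`. -/
def parseLang (e : Exp α) : Language α :=
  {u | ∀ (Δ₁ Δ₂ : Cedent α) (w : List α),
    Parses w (Δ₁ ++ (u.map tok ++ Δ₂)) → Parses w (Δ₁ ++ e :: Δ₂)}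

theorem parseLang_unfold_le (e : Exp α) : parseLang e.unfold ≤ parseLang (mu e) := by
  intro u hu Δ₁ Δ₂ w h
  refine HasSeg.step (.muR (w.map tok) ∅ Δ₁ e Δ₂) (by simp [Rule.concl]) ?_
  simpa [Rule.prems, Parses] using hu Δ₁ Δ₂ w h

theorem parseLang_plus_left (e f : Exp α) : parseLang e ≤ parseLang (plus e f) := by
  intro u hu Δ₁ Δ₂ w h
  refine HasSeg.step (.plusR (w.map tok) ∅ Δ₁ e f Δ₂) (by simp [Rule.concl]) ?_
  simp only [Rule.prems, List.mem_singleton, forall_eq]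
  exact HasSeg.weaken (by simp) (hu Δ₁ Δ₂ w h)

theorem parseLang_plus_right (e f : Exp α) : parseLang f ≤ parseLang (plus e f) := by
  intro u hu Δ₁ Δ₂ w h
  refine HasSeg.step (.plusR (w.map tok) ∅ Δ₁ e f Δ₂) (by simp [Rule.concl]) ?_
  simp only [Rule.prems, List.mem_singleton, forall_eq]
  exact HasSeg.weaken (by simp) (hu Δ₁ Δ₂ w h)

theorem parseLang_times (e f : Exp α) : parseLang e * parseLang f ≤ parseLang (times e f) := by
  rintro _ ⟨u, hu, v, hv, rfl⟩ Δ₁ Δ₂ w h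
  refine HasSeg.step (.timesR (w.map tok) ∅ Δ₁ e f Δ₂) (by simp [Rule.concl]) ?_
  simp only [Rule.prems, List.mem_singleton, forall_eq]
  refine hu Δ₁ (f :: Δ₂) w ?_
  have h' : Parses w ((Δ₁ ++ u.map tok) ++ (v.map tok ++ Δ₂)) := by simpa using h
  simpa [Parses] using hv _ Δ₂ w h'

/-- Soundness of the parsing interpretation for open expressions. At a fixed point `μX e`, the
language `parseLang (μX e)` is a pre-fixed point by `μ-r`. -/
theorem sem_le_parseLang {e : Exp α} : ∀ {ρ : ℕ → Language α} {τ : ℕ → Exp α},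
    (∀ n, (τ n).Closed) → (∀ n, ρ n ≤ parseLang (τ n)) → sem ρ e ≤ parseLang (psub τ 0 e) := by
  induction e with
  | zero => intro ρ τ _ _; exact bot_le
  | one =>
    rintro ρ τ _ _ u rfl Δ₁ Δ₂ w h
    refine HasSeg.step (.oneR (w.map tok) ∅ Δ₁ Δ₂) (by simp [Rule.concl, psub]) ?_
    simpa [Rule.prems, Parses] using h
  | var n => intro ρ τ _ h; simpa [psub, sem] using h n
  | tok a =>
    rintro ρ τ _ _ u rfl Δ₁ Δ₂ w h
    simpa [psub] using h
  | plus e f ihe ihf =>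
    intro ρ τ hτ h
    exact sup_le ((ihe hτ h).trans (parseLang_plus_left _ _))
      ((ihf hτ h).trans (parseLang_plus_right _ _))
  | times e f ihe ihf =>
    intro ρ τ hτ h
    exact (mul_le_mul' (ihe hτ h) (ihf hτ h)).trans (parseLang_times _ _)
  | mu e ih =>
    intro ρ τ hτ h
    set g : Exp α := psub τ 0 (mu e) with hg
    refine sInf_le (?_ : sem (consEnv (parseLang g) ρ) e ≤ parseLang g)
    have h1 : sem (consEnv (parseLang g) ρ) e ≤ parseLang (psub (consSub g τ) 0 e) := by
      refine ih ?_ ?_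
      · rintro (_ | n)
        · exact closedUnder_psub hτ 0
        · exact hτ n
      · rintro (_ | n)
        · exact le_rfl
        · exact h n
    rw [← subst_psub g hτ] at h1
    exact h1.trans (parseLang_unfold_le (psub τ 1 e))

theorem langOf_le_parseLang {e : Exp α} (he : e.Closed) : langOf e ≤ parseLang e := by
  have h := sem_le_parseLang (e := e) (ρ := fun _ => 0) (τ := fun _ => zero)
    (fun _ => trivial) (fun _ => bot_le)
  rwa [psub_of_closedUnder _ he] at h

/-- A suffix `u` of the right-hand cedent may be replaced by any closed `Δ` with `u ∈ L(Δ)`. The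
prefix `Δ₁` is arbitrary because the recursion on `Δ` moves letters of `u` into it. -/
theorem langCed_parse {Δ : Cedent α} : CedClosed Δ → ∀ {u : List α}, u ∈ langCed Δ →
    ∀ (Δ₁ : Cedent α) (w : List α), Parses w (Δ₁ ++ u.map tok) → Parses w (Δ₁ ++ Δ) := by
  induction Δ with
  | nil =>
    rintro _ u rfl Δ₁ w h
    simpa using h
  | cons e Δ ih =>
    intro hc u hu Δ₁ w h
    rw [langCed_cons] at hu
    obtain ⟨u₁, h₁, u₂, h₂, rfl⟩ := hu
    refine langOf_le_parseLang (hc e (by simp)) h₁ Δ₁ Δ w ?_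
    rw [← List.append_assoc]
    exact ih (fun f hf => hc f (by simp [hf])) h₂ _ w (by simpa using h)

/-! ### Reducing the left-hand side -/

theorem exists_segment (s : Sqt α) (h : Good s) : HasSeg s := by
  obtain ⟨Γ, S⟩ := s
  induction hn : csize Γ using Nat.strong_induction_on generalizing Γ with
  | _ n ih =>
  subst hn
  rcases word_or_split Γ with ⟨w, rfl⟩ | ⟨Γ₁, e, Γ₂, rfl, hne⟩
  · obtain ⟨Δ, hΔ, hw⟩ := mem_langRHS (h.2 (mem_langCed_word w))
    exact HasSeg.weaken hΔ (langCed_parse (h.1.2 Δ hΔ) hw [] w (parses_word w))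
  · have he : e.Closed := h.1.1 e (by simp)
    cases e with
    | zero => exact HasSeg.step (.zeroL Γ₁ Γ₂ S) rfl (by simp [Rule.prems])
    | one =>
      refine HasSeg.step (.oneL Γ₁ Γ₂ S) rfl ?_
      simp only [Rule.prems, List.mem_singleton, forall_eq]
      exact ih _ (by simp [csize, esize]) _
        (h.replace (Δ := []) (by simp [CedClosed]) le_rfl) rfl
    | var n => exact absurd he (Nat.not_lt_zero n)
    | tok a => exact absurd rfl (hne a)
    | plus e f =>
      refine HasSeg.step (.plusL Γ₁ e f Γ₂ S) rfl ?_
      simp only [Rule.prems, List.mem_cons, List.not_mem_nil, or_false, forall_eq_or_imp, forall_eq]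
      refine ⟨ih _ (by simp [csize, esize]) _
        (h.replace (Δ := [e]) (by simpa [CedClosed] using (show e.Closed from he.1)) ?_) rfl,
        ih _ (by simp [csize, esize]) _
        (h.replace (Δ := [f]) (by simpa [CedClosed] using (show f.Closed from he.2)) ?_) rfl⟩
      · simp only [langCed, List.map_cons, List.map_nil, List.prod_singleton]
        exact (le_sup_left : langOf e ≤ langOf e ⊔ langOf f)
      · simp only [langCed, List.map_cons, List.map_nil, List.prod_singleton]
        exact (le_sup_right : langOf f ≤ langOf e ⊔ langOf f)
    | times e f =>
      refine HasSeg.step (.timesL Γ₁ e f Γ₂ S) rfl ?_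
      simp only [Rule.prems, List.mem_singleton, forall_eq]
      refine ih _ (by simp [csize, esize]; omega) _
        (h.replace (Δ := [e, f]) (by simpa [CedClosed] using ⟨he.1, he.2⟩) ?_) rfl
      simp only [langCed, List.map_cons, List.map_nil, List.prod_cons, List.prod_nil, mul_one]
      exact le_refl (langOf e * langOf f)
    | mu e =>
      refine ⟨0, .muL Γ₁ e Γ₂ S, trivial, rfl, ?_⟩
      simp only [Rule.prems, List.mem_singleton, forall_eq]
      refine h.replace (Δ := [e.unfold]) ?_ ?_
      · simpa [CedClosed] using (show e.unfold.Closed from closedUnder_subst he he)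
      · simpa [langCed] using langOf_unfold_le he

/-! ### Gluing segments into an infinite proof -/

theorem Seg.exists_rule {n : ℕ} {s : Sqt α} (h : Seg n s) :
    ∃ r : Rule α, r.concl = s ∧ ∀ s' ∈ r.prems, ∃ m, Seg m s' ∧ (r.IsMuL ∨ m < n) := by
  induction n with
  | zero =>
    obtain ⟨r, h1, h2, h3⟩ := h
    refine ⟨r, h2, fun s' hs' => ?_⟩
    obtain ⟨m, hm⟩ := exists_segment s' (h3 s' hs')
    exact ⟨m, hm, .inl h1⟩
  | succ n ih =>
    rcases h with h | ⟨r, h1, h2⟩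
    · obtain ⟨r, h1, h2⟩ := ih h
      refine ⟨r, h1, fun s' hs' => ?_⟩
      obtain ⟨m, hm, h⟩ := h2 s' hs'
      exact ⟨m, hm, h.imp id fun h => by omega⟩
    · exact ⟨r, h1, fun s' hs' => ⟨n, h2 s' hs', .inr (by omega)⟩⟩

/-- A sequent together with a bound on the height of a derivation segment for it. -/
abbrev SegState (α : Type) [DecidableEq α] := {p : ℕ × Sqt α // Seg p.1 p.2}

theorem proofInf_of_segment {s : Sqt α} (h : HasSeg s) : ProofInf s := by
  obtain ⟨n₀, h₀⟩ := h
  have hrule : ∀ x : SegState α, ∃ r : Rule α, r.concl = x.1.2 ∧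
      ∀ s' ∈ r.prems, ∃ m, Seg m s' ∧ (r.IsMuL ∨ m < x.1.1) := fun x => x.2.exists_rule
  choose rl hconcl hprem using hrule
  have hchild : ∀ (x : SegState α) (i : ℕ) (hi : i < (rl x).prems.length),
      ∃ y : SegState α, y.1.2 = (rl x).prems.get ⟨i, hi⟩ ∧ ((rl x).IsMuL ∨ y.1.1 < x.1.1) := by
    intro x i hi
    obtain ⟨m, hm, h⟩ := hprem x _ (List.get_mem _ ⟨i, hi⟩)
    exact ⟨⟨(m, _), hm⟩, rfl, h⟩
  choose ch hch hlt using hchild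
  let next : Option (SegState α) → ℕ → Option (SegState α) := fun o i =>
    o.bind fun x => if hi : i < (rl x).prems.length then some (ch x i hi) else none
  let node : List ℕ → Option (SegState α) := fun p => p.foldl next (some ⟨(n₀, s), h₀⟩)
  have node_snoc : ∀ p i, node (p ++ [i]) = next (node p) i := fun p i => by simp [node]
  refine ⟨⟨fun p => (node p).map rl, rfl, ?_, ?_, ?_⟩, ⟨_, rfl, hconcl _⟩, ?_⟩
  · intro p r hr i hi
    obtain ⟨x, hx, rfl⟩ := Option.map_eq_some_iff.1 hr
    refine ⟨rl (ch x i hi), ?_, ?_⟩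
    · simp [node_snoc, next, hx, hi]
    · rw [hconcl, hch]
  · intro p r hr i hi
    obtain ⟨x, hx, rfl⟩ := Option.map_eq_some_iff.1 hr
    simp [node_snoc, next, hx, not_lt.2 hi]
  · intro p i hpi
    cases hx : node p with
    | none => simp [node_snoc, next, hx] at hpi
    | some x => simp
  · intro b hb N
    by_contra! hno
    -- Without `μ-l` steps above `N`, segment heights would decrease forever.
    have hdesc : ∀ k n x, N ≤ n → node (Preproof.pathOf b n) = some x → x.1.1 = k → False := by
      intro k
      induction k using Nat.strong_induction_on with
      | _ k ih =>
      intro n x hn hx hk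
      have hnot : ¬ (rl x).IsMuL := hno n hn (rl x) (by simp [hx])
      have hpath : Preproof.pathOf b (n + 1) = Preproof.pathOf b n ++ [b n] := by
        simp [Preproof.pathOf, List.range_succ]
      have hsome : (node (Preproof.pathOf b (n + 1))).isSome := by simpa using hb (n + 1)
      by_cases hi : b n < (rl x).prems.length
      · have hy : node (Preproof.pathOf b (n + 1)) = some (ch x (b n) hi) := by
          simp [hpath, node_snoc, next, hx, hi]
        exact ih _ (hk ▸ (hlt x (b n) hi).resolve_left hnot) (n + 1) _ (by omega) hy rfl
      · simp [hpath, node_snoc, next, hx, hi] at hsome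
    have hsome : (node (Preproof.pathOf b N)).isSome := by simpa using hb N
    obtain ⟨x, hx⟩ := Option.isSome_iff_exists.1 hsome
    exact hdesc _ N x le_rfl hx rfl

end Completeness

/-- Theorem 3.7, completeness: if `L(Γ) ⊆ L(S)` then
`μHKA ⊢∞ Γ → S`. -/
theorem completeness_muHKA {α : Type} [Fintype α] [DecidableEq α] (s : Sqt α)
    (hc : s.ClosedSeq) (hg : s.GuardedSeq)
    (h : s.Valid) :
    ProofInf s := by
  exact proofInf_of_segment (exists_segment s ⟨hc, h⟩)

end CFPT
end

section
/- Translation theorem: if the hypersequent e → [f] has a progressing non-wellfounded proof in μHKA (μHKA ⊢∞ e → [f]), then the inequality e ≤ f (i.e., the sequent e → [f]) is derivable by a wellfounded proof in the ω-branching system μHKA_ω. -/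
/-!
The translation goes through words. Call a word `w` *parsed* by a cedent `Γ` if it is generated by
`Γ` by a finite derivation in which every `μX e` is unfolded to `e(μX e)`; the size of a parse is
its number of unfoldings.

* `derivW_word_of_progressing`: if `Γ → S` has an `∞`-proof and `Γ` parses `w`, then `w → S` is
  derivable in `μHKA_ω`. Starting at the root of the `∞`-proof, the parse selects at each left
  rule a premiss and a parse of it, while right rules, weakenings and letter rules can be applied
  to the word itself. Sizes never increase and drop at each `μ-l` step, so an infinite branch
  followed in this way would contradict progress (`Rule.step` is the local form of the argument).
* `leftComplete_of_closed`: a closed `e` may be introduced on the left, in any context, as soon as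
  all the words it parses may be. The proof is a logical relation argument over simultaneous closed
  substitutions, where the `ω`-rule reduces `μX e` to its approximants `e^n(0)`; the words parsed
  by `e^n(0)` are parsed by `μX e` (`Parse.mu_of_iter`).
-/

namespace CFPT

/-! ### Closedness and simultaneous substitution -/

namespace Exp

variable {α : Type}

theorem ClosedUnder.mono {e : Exp α} : ∀ {k l : ℕ}, e.ClosedUnder k → k ≤ l → e.ClosedUnder l := by
  induction e with
  | zero | one | tok => intros; trivial
  | var n => intro k l h hl; exact lt_of_lt_of_le h hl
  | plus e f ihe ihf | times e f ihe ihf =>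
    intro k l h hl; exact ⟨ihe h.1 hl, ihf h.2 hl⟩
  | mu e ih => intro k l h hl; exact ih (k := k + 1) h (by omega)

theorem subst_eq_self (g : Exp α) {e : Exp α} : ∀ {d : ℕ}, e.ClosedUnder d → subst g d e = e := by
  induction e with
  | zero | one | tok => intros; rfl
  | var n => intro d h; exact if_neg (Nat.ne_of_lt h)
  | plus e f ihe ihf | times e f ihe ihf =>
    intro d h; simp only [subst, ihe h.1, ihf h.2]
  | mu e ih => intro d h; simp only [subst, ih (d := d + 1) h]

theorem Closed.subst_eq {h : Exp α} (hh : h.Closed) (g : Exp α) (d : ℕ) : subst g d h = h :=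
  subst_eq_self g (ClosedUnder.mono hh (Nat.zero_le d))

/-- Simultaneous substitution of the closed expressions `σ 0, σ 1, …` for the variables
`k, k + 1, …`. Since the `σ i` are meant to be closed, they are not shifted under binders. -/
def msubst (σ : ℕ → Exp α) : ℕ → Exp α → Exp α
  | _, zero => zero
  | _, one => one
  | k, var n => if n < k then var n else σ (n - k)
  | _, tok a => tok a
  | k, plus e f => plus (msubst σ k e) (msubst σ k f)
  | k, times e f => times (msubst σ k e) (msubst σ k f)
  | k, mu e => mu (msubst σ (k + 1) e)

theorem msubst_eq_self (σ : ℕ → Exp α) {e : Exp α} :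
    ∀ {k : ℕ}, e.ClosedUnder k → msubst σ k e = e := by
  induction e with
  | zero | one | tok => intros; rfl
  | var n => intro k h; exact if_pos h
  | plus e f ihe ihf | times e f ihe ihf =>
    intro d h; simp only [msubst, ihe h.1, ihf h.2]
  | mu e ih => intro k h; simp only [msubst, ih (k := k + 1) h]

theorem closedUnder_msubst {σ : ℕ → Exp α} (hσ : ∀ i, (σ i).Closed) (e : Exp α) :
    ∀ k : ℕ, (msubst σ k e).ClosedUnder k := by
  induction e with
  | zero | one | tok => intros; trivial
  | var n =>
    intro k
    unfold msubst
    split_ifs with h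
    · exact h
    · exact ClosedUnder.mono (hσ _) (Nat.zero_le k)
  | plus e f ihe ihf | times e f ihe ihf => intro k; exact ⟨ihe k, ihf k⟩
  | mu e ih => intro k; exact ih (k + 1)

/-- The substitution `g, σ 0, σ 1, …`. -/
def consSubst (g : Exp α) (σ : ℕ → Exp α) : ℕ → Exp α
  | 0 => g
  | n + 1 => σ n

theorem subst_msubst {σ : ℕ → Exp α} (hσ : ∀ i, (σ i).Closed) (g e : Exp α) :
    ∀ k : ℕ, subst g k (msubst σ (k + 1) e) = msubst (consSubst g σ) k e := by
  induction e with
  | zero | one | tok => intros; rfl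
  | var n =>
    intro k
    rcases lt_trichotomy n k with h | h | h
    · simp [msubst, subst, h, Nat.lt_succ_of_lt h, h.ne]
    · subst h
      simp [msubst, subst, consSubst]
    · obtain ⟨m, rfl⟩ := Nat.exists_eq_add_of_lt h
      have h1 : ¬ k + m + 1 < k + 1 := by omega
      have h2 : ¬ k + m + 1 < k := by omega
      have h3 : k + m + 1 - (k + 1) = m := by omega
      have h4 : k + m + 1 - k = m + 1 := by omega
      simp only [msubst, if_neg h1, if_neg h2, h3, h4, consSubst]
      exact (hσ m).subst_eq g k
  | plus e f ihe ihf | times e f ihe ihf => intro k; simp only [msubst, subst, ihe, ihf]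
  | mu e ih => intro k; simp only [msubst, subst, ih]

theorem closed_subst {g : Exp α} (hg : g.Closed) {e : Exp α} :
    ∀ {d : ℕ}, e.ClosedUnder (d + 1) → (subst g d e).ClosedUnder d := by
  induction e with
  | zero | one | tok => intros; trivial
  | var n =>
    intro d h
    unfold subst
    split_ifs with h'
    · exact ClosedUnder.mono hg (Nat.zero_le d)
    · exact lt_of_le_of_ne (Nat.lt_succ_iff.mp h) h'
  | plus e f ihe ihf | times e f ihe ihf => intro k h; exact ⟨ihe h.1, ihf h.2⟩
  | mu e ih => intro d h; exact ih (d := d + 1) h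

theorem closed_iter {e : Exp α} (he : e.ClosedUnder 1) : ∀ n, (iter e n).Closed
  | 0 => trivial
  | n + 1 => closed_subst (closed_iter he n) he

end Exp

/-! ### Parses -/

/-- `Parse e w n`: the word `w` is generated by the expression `e`, by a derivation that unfolds
fixed points exactly `n` times. -/
inductive Parse {α : Type} : Exp α → List α → ℕ → Prop
  | one : Parse .one [] 0
  | tok (a : α) : Parse (.tok a) [a] 0
  | plusl {e f w n} : Parse e w n → Parse (.plus e f) w n
  | plusr {e f w n} : Parse f w n → Parse (.plus e f) w n
  | times {e f w v n m} : Parse e w n → Parse f v m → Parse (.times e f) (w ++ v) (n + m)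
  | mu {e w n} : Parse e.unfold w n → Parse (.mu e) w (n + 1)

/-- `CParse Γ w n`: the word `w` is generated by the cedent `Γ` with `n` unfoldings in total. -/
inductive CParse {α : Type} : Cedent α → List α → ℕ → Prop
  | nil : CParse [] [] 0
  | cons {e Γ w v n m} : Parse e w n → CParse Γ v m → CParse (e :: Γ) (w ++ v) (n + m)

/-- `SubstRel g g' x y`: `y` arises from `x` by replacing some occurrences of `g` by `g'`. -/
inductive SubstRel {α : Type} (g g' : Exp α) : Exp α → Exp α → Prop
  | base {x y} : x = g → y = g' → SubstRel g g' x y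
  | zero : SubstRel g g' .zero .zero
  | one : SubstRel g g' .one .one
  | var (n) : SubstRel g g' (.var n) (.var n)
  | tok (a) : SubstRel g g' (.tok a) (.tok a)
  | plus {a b c d} : SubstRel g g' a c → SubstRel g g' b d → SubstRel g g' (.plus a b) (.plus c d)
  | times {a b c d} :
      SubstRel g g' a c → SubstRel g g' b d → SubstRel g g' (.times a b) (.times c d)
  | mu {a b} : SubstRel g g' a b → SubstRel g g' (.mu a) (.mu b)

section

variable {α : Type}

theorem SubstRel.refl (g g' e : Exp α) : SubstRel g g' e e := by
  induction e with
  | zero => exact .zero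
  | one => exact .one
  | var n => exact .var n
  | tok a => exact .tok a
  | plus e f ihe ihf => exact .plus ihe ihf
  | times e f ihe ihf => exact .times ihe ihf
  | mu e ih => exact .mu ih

/-- Closedness of `g` and `g'` makes the base pair invariant under further substitution. -/
theorem SubstRel.subst {g g' : Exp α} (hg : g.Closed) (hg' : g'.Closed) {h h' x y : Exp α}
    (hh : SubstRel g g' h h') (hxy : SubstRel g g' x y) :
    ∀ d, SubstRel g g' (Exp.subst h d x) (Exp.subst h' d y) := by
  induction hxy with
  | base hx hy =>
    intro d
    rw [hx, hy, hg.subst_eq, hg'.subst_eq]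
    exact .base rfl rfl
  | zero => intro d; exact .zero
  | one => intro d; exact .one
  | tok a => intro d; exact .tok a
  | var n =>
    intro d
    simp only [Exp.subst]
    split_ifs
    · exact hh
    · exact .var n
  | plus _ _ ih1 ih2 => intro d; exact .plus (ih1 d) (ih2 d)
  | times _ _ ih1 ih2 => intro d; exact .times (ih1 d) (ih2 d)
  | mu _ ih => intro d; exact .mu (ih (d + 1))

theorem Parse.mono {g g' : Exp α} (hg : g.Closed) (hg' : g'.Closed)
    (H : ∀ w n, Parse g w n → ∃ m, Parse g' w m) {x : Exp α} {w : List α} {n : ℕ}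
    (hx : Parse x w n) : ∀ y, SubstRel g g' x y → ∃ m, Parse y w m := by
  induction hx with
  | one =>
    intro y hy
    cases hy with
    | base h1 h2 => subst h1 h2; exact H _ _ (.one)
    | one => exact ⟨_, .one⟩
  | tok a =>
    intro y hy
    cases hy with
    | base h1 h2 => subst h1 h2; exact H _ _ (.tok a)
    | tok => exact ⟨_, .tok a⟩
  | plusl p ih =>
    intro y hy
    cases hy with
    | base h1 h2 => subst h1 h2; exact H _ _ (.plusl p)
    | plus r1 r2 => obtain ⟨m, q⟩ := ih _ r1; exact ⟨m, .plusl q⟩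
  | plusr p ih =>
    intro y hy
    cases hy with
    | base h1 h2 => subst h1 h2; exact H _ _ (.plusr p)
    | plus r1 r2 => obtain ⟨m, q⟩ := ih _ r2; exact ⟨m, .plusr q⟩
  | times p1 p2 ih1 ih2 =>
    intro y hy
    cases hy with
    | base h1 h2 => subst h1 h2; exact H _ _ (.times p1 p2)
    | times r1 r2 =>
      obtain ⟨m1, q1⟩ := ih1 _ r1
      obtain ⟨m2, q2⟩ := ih2 _ r2
      exact ⟨_, .times q1 q2⟩
  | mu p ih =>
    intro y hy
    cases hy with
    | base h1 h2 => subst h1 h2; exact H _ _ (.mu p)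
    | mu r =>
      obtain ⟨m, q⟩ := ih _ (SubstRel.subst hg hg' (.mu r) r 0)
      exact ⟨_, .mu q⟩

theorem Parse.mu_of_iter {e : Exp α} (he : e.ClosedUnder 1) :
    ∀ (k : ℕ) {w : List α} {n : ℕ}, Parse (Exp.iter e k) w n → ∃ m, Parse (.mu e) w m
  | 0, _, _, h => nomatch h
  | k + 1, w, n, h => by
    have hc := Exp.closed_iter he k
    have hm : (Exp.mu e).Closed := he
    obtain ⟨m, q⟩ := Parse.mono hc hm (fun _ _ p => Parse.mu_of_iter he k p) h _
      (SubstRel.subst hc hm (.base rfl rfl) (SubstRel.refl _ _ e) 0)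
    exact ⟨_, .mu q⟩

theorem CParse.cons_inv {e : Exp α} {Γ : Cedent α} {w : List α} {n : ℕ}
    (h : CParse (e :: Γ) w n) : ∃ w₁ w₂ n₁ n₂, w = w₁ ++ w₂ ∧ n = n₁ + n₂ ∧
      Parse e w₁ n₁ ∧ CParse Γ w₂ n₂ := by
  cases h with
  | cons p q => exact ⟨_, _, _, _, rfl, rfl, p, q⟩

theorem CParse.append_inv {Γ Γ' : Cedent α} : ∀ {w : List α} {n : ℕ}, CParse (Γ ++ Γ') w n →
    ∃ w₁ w₂ n₁ n₂, w = w₁ ++ w₂ ∧ n = n₁ + n₂ ∧ CParse Γ w₁ n₁ ∧ CParse Γ' w₂ n₂ := by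
  induction Γ with
  | nil => intro w n h; exact ⟨[], w, 0, n, rfl, (zero_add n).symm, .nil, h⟩
  | cons e Γ ih =>
    intro w n h
    obtain ⟨w₁, w₂, n₁, n₂, rfl, rfl, p, q⟩ := h.cons_inv
    obtain ⟨v₁, v₂, m₁, m₂, rfl, rfl, q₁, q₂⟩ := ih q
    exact ⟨w₁ ++ v₁, v₂, n₁ + m₁, m₂, by simp, by omega, .cons p q₁, q₂⟩

theorem CParse.append {Γ Γ' : Cedent α} {w v : List α} {n m : ℕ} (h : CParse Γ w n)
    (h' : CParse Γ' v m) : CParse (Γ ++ Γ') (w ++ v) (n + m) := by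
  induction h with
  | nil => simpa using h'
  | cons p _ ih => rw [List.cons_append, List.append_assoc, add_assoc]; exact .cons p ih

theorem CParse.mid_inv {Γ Γ' : Cedent α} {e : Exp α} {w : List α} {n : ℕ}
    (h : CParse (Γ ++ e :: Γ') w n) : ∃ u v z i j k, w = u ++ (v ++ z) ∧ n = i + (j + k) ∧
      CParse Γ u i ∧ Parse e v j ∧ CParse Γ' z k := by
  obtain ⟨u, _, i, _, rfl, rfl, hu, h⟩ := h.append_inv
  obtain ⟨v, z, j, k, rfl, rfl, hv, hz⟩ := h.cons_inv
  exact ⟨u, v, z, i, j, k, rfl, rfl, hu, hv, hz⟩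

end

/-! ### Left rules: reduction to words -/

/-- The cedent of letters spelling a word. -/
def wordCed {α : Type} (w : List α) : Cedent α := w.map .tok

section

variable {α : Type} [DecidableEq α]

/-- `e` is `LeftComplete` if, in any context on the left, `e` may be introduced once every word
generated by `e` may be. -/
def LeftComplete (e : Exp α) : Prop :=
  ∀ (Γ Γ' : Cedent α) (S : RHSet α),
    (∀ w n, Parse e w n → DerivW ⟨Γ ++ (wordCed w ++ Γ'), S⟩) → DerivW ⟨Γ ++ e :: Γ', S⟩

theorem leftComplete_zero : LeftComplete (.zero : Exp α) := fun Γ Γ' S _ =>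
  DerivW.rule (.zeroL Γ Γ' S) (by simp [Rule.prems])

/-- The logical relation argument: substitution instances by closed left complete expressions are
left complete. In the case of a fixed point the `ω`-rule reduces the claim to the approximants,
which are handled by induction on their index. -/
theorem leftComplete_msubst (e : Exp α) : ∀ σ : ℕ → Exp α,
    (∀ i, (σ i).Closed ∧ LeftComplete (σ i)) → LeftComplete (Exp.msubst σ 0 e) := by
  induction e with
  | zero => intro σ _; exact leftComplete_zero
  | one =>
    intro σ _ Γ Γ' S H
    refine DerivW.rule (.oneL Γ Γ' S) ?_
    simpa [Rule.prems, wordCed] using H [] 0 .one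
  | var n => intro σ h; exact (h n).2
  | tok a => intro σ _ Γ Γ' S H; exact H [a] 0 (.tok a)
  | plus e f ihe ihf =>
    intro σ h Γ Γ' S H
    refine DerivW.rule (.plusL Γ _ _ Γ' S) ?_
    simp only [Rule.prems, List.mem_cons, List.not_mem_nil, or_false, forall_eq_or_imp, forall_eq]
    exact ⟨ihe σ h _ _ _ fun w n p => H w n (.plusl p), ihf σ h _ _ _ fun w n p => H w n (.plusr p)⟩
  | times e f ihe ihf =>
    intro σ h Γ Γ' S H
    refine DerivW.rule (.timesL Γ _ _ Γ' S) ?_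
    simp only [Rule.prems, List.mem_cons, List.not_mem_nil, or_false, forall_eq]
    refine ihe σ h _ _ _ fun w n p => ?_
    rw [← List.append_assoc]
    refine ihf σ h _ _ _ fun v m q => ?_
    simpa [wordCed] using H _ _ (.times p q)
  | mu e ih =>
    intro σ h Γ Γ' S H
    have hσ : ∀ i, (σ i).Closed := fun i => (h i).1
    have hcl : (Exp.msubst σ 1 e).ClosedUnder 1 := Exp.closedUnder_msubst hσ e 1
    have hit : ∀ k, LeftComplete (Exp.iter (Exp.msubst σ 1 e) k) := by
      intro k
      induction k with
      | zero => exact leftComplete_zero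
      | succ k ihk =>
        simp only [Exp.iter]
        rw [Exp.subst_msubst hσ]
        refine ih _ fun i => ?_
        cases i with
        | zero => exact ⟨Exp.closed_iter hcl k, ihk⟩
        | succ i => exact h i
    refine DerivW.omega Γ _ Γ' S fun k => hit k _ _ _ fun w n p => ?_
    obtain ⟨m, q⟩ := Parse.mu_of_iter hcl k p
    exact H w m q

theorem leftComplete_of_closed {e : Exp α} (he : e.Closed) : LeftComplete e := by
  have := leftComplete_msubst e (fun _ => .zero) fun _ => ⟨trivial, leftComplete_zero⟩
  rwa [Exp.msubst_eq_self _ he] at this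

/-! ### Following a parse through an `∞`-proof -/

theorem DerivW.of_rule {r : Rule α} {s t : Sqt α} (hr : r.concl = s) (hp : r.prems = [t])
    (ht : DerivW t) : DerivW s := by
  rw [← hr]
  refine DerivW.rule r ?_
  rw [hp]
  simpa using ht

/-- If the word `w`, parsed by the left-hand side of the conclusion of `r`, does not derive the
right-hand side, then neither does some word parsed by a premiss. The number of unfoldings never
grows, and drops at a `μ-l` step. -/
theorem Rule.step (r : Rule α) {w : List α} {n : ℕ} (h : CParse r.concl.lhs w n)
    (hn : ¬ DerivW ⟨wordCed w, r.concl.rhs⟩) :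
    ∃ (i : ℕ) (hi : i < r.prems.length) (v : List α) (m : ℕ),
      CParse (r.prems.get ⟨i, hi⟩).lhs v m ∧
      ¬ DerivW ⟨wordCed v, (r.prems.get ⟨i, hi⟩).rhs⟩ ∧ m ≤ n ∧ (r.IsMuL → m < n) := by
  cases r with
  | init =>
    cases h
    exact absurd (DerivW.rule .init (by simp [Rule.prems])) hn
  | wr Γ S Δ =>
    exact ⟨0, Nat.one_pos, w, n, h, fun d => hn (.of_rule (r := .wr _ S Δ) rfl rfl d), le_rfl,
      False.elim⟩
  | zeroR Γ S Δ Δ' =>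
    exact ⟨0, Nat.one_pos, w, n, h, fun d => hn (.of_rule (r := .zeroR _ S Δ Δ') rfl rfl d),
      le_rfl, False.elim⟩
  | oneR Γ S Δ Δ' =>
    exact ⟨0, Nat.one_pos, w, n, h, fun d => hn (.of_rule (r := .oneR _ S Δ Δ') rfl rfl d),
      le_rfl, False.elim⟩
  | timesR Γ S Δ e f Δ' =>
    exact ⟨0, Nat.one_pos, w, n, h, fun d => hn (.of_rule (r := .timesR _ S Δ e f Δ') rfl rfl d),
      le_rfl, False.elim⟩
  | plusR Γ S Δ e f Δ' =>
    exact ⟨0, Nat.one_pos, w, n, h, fun d => hn (.of_rule (r := .plusR _ S Δ e f Δ') rfl rfl d),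
      le_rfl, False.elim⟩
  | muR Γ S Δ e Δ' =>
    exact ⟨0, Nat.one_pos, w, n, h, fun d => hn (.of_rule (r := .muR _ S Δ e Δ') rfl rfl d),
      le_rfl, False.elim⟩
  | kl a Γ S =>
    obtain ⟨_, v, _, m, rfl, rfl, p, q⟩ := CParse.cons_inv h
    cases p
    exact ⟨0, Nat.one_pos, v, m, q, fun d => hn (.of_rule (r := .kl a _ S) rfl rfl d), by omega,
      False.elim⟩
  | kr a Γ S =>
    obtain ⟨v, _, m, _, rfl, rfl, q, p⟩ := CParse.append_inv h
    obtain ⟨_, _, _, _, rfl, rfl, p, p'⟩ := p.cons_inv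
    cases p
    cases p'
    exact ⟨0, Nat.one_pos, v, m, q,
      fun d => hn (.of_rule (r := .kr a _ S) (by simp [Rule.concl, wordCed]) rfl d), by omega,
      False.elim⟩
  | zeroL Γ Γ' S =>
    obtain ⟨u, v, z, i, j, k, rfl, rfl, hu, hv, hz⟩ := CParse.mid_inv h
    cases hv
  | oneL Γ Γ' S =>
    obtain ⟨u, v, z, i, j, k, rfl, rfl, hu, hv, hz⟩ := CParse.mid_inv h
    cases hv
    exact ⟨0, Nat.one_pos, _, _, hu.append hz, hn, by omega, False.elim⟩
  | timesL Γ e f Γ' S =>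
    obtain ⟨u, v, z, i, j, k, rfl, rfl, hu, hv, hz⟩ := CParse.mid_inv h
    cases hv with
    | times p q =>
      refine ⟨0, Nat.one_pos, _, _, hu.append (.cons p (.cons q hz)), ?_, by omega, False.elim⟩
      simpa [Rule.concl, Rule.prems] using hn
  | plusL Γ e f Γ' S =>
    obtain ⟨u, v, z, i, j, k, rfl, rfl, hu, hv, hz⟩ := CParse.mid_inv h
    cases hv with
    | plusl p => exact ⟨0, Nat.two_pos, _, _, hu.append (.cons p hz), hn, le_rfl, False.elim⟩
    | plusr p => exact ⟨1, Nat.one_lt_two, _, _, hu.append (.cons p hz), hn, le_rfl, False.elim⟩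
  | muL Γ e Γ' S =>
    obtain ⟨u, v, z, i, j, k, rfl, rfl, hu, hv, hz⟩ := CParse.mid_inv h
    cases hv with
    | mu p =>
      exact ⟨0, Nat.one_pos, _, _, hu.append (.cons p hz), hn, by omega, fun _ => by omega⟩

/-- A node of a preproof together with a parsed word that fails to derive the right-hand side. -/
structure BadNode (P : Preproof α) where
  /-- the position of the node in the preproof -/
  pos : List ℕ
  /-- the rule at that position -/
  rule : Rule α
  /-- the word that fails -/
  word : List α
  /-- the number of unfoldings in its parse -/
  size : ℕ
  rule_eq : P.rule pos = some rule
  parse : CParse rule.concl.lhs word size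
  bad : ¬ DerivW ⟨wordCed word, rule.concl.rhs⟩

theorem BadNode.exists_next {P : Preproof α} (x : BadNode P) :
    ∃ (i : ℕ) (y : BadNode P), y.pos = x.pos ++ [i] ∧ y.size ≤ x.size ∧
      (x.rule.IsMuL → y.size < x.size) := by
  obtain ⟨i, hi, v, m, hp, hb, hle, hlt⟩ := x.rule.step x.parse x.bad
  obtain ⟨r', hr', hc⟩ := P.children_concl _ _ x.rule_eq i hi
  exact ⟨i, ⟨_, r', v, m, hr', hc ▸ hp, hc ▸ hb⟩, rfl, hle, hlt⟩

theorem derivW_word_of_progressing {P : Preproof α} (hP : P.Progressing) {s : Sqt α}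
    (hs : P.Concl s) {w : List α} {n : ℕ} (hw : CParse s.lhs w n) : DerivW ⟨wordCed w, s.rhs⟩ := by
  by_contra hbad
  obtain ⟨r, hr, rfl⟩ := hs
  choose dir next hpos hle hlt using fun x : BadNode P => x.exists_next
  let node : ℕ → BadNode P := fun k => next^[k] ⟨[], r, w, n, hr, hw, hbad⟩
  have hnode : ∀ k, node (k + 1) = next (node k) := fun k => Function.iterate_succ_apply' _ _ _
  let b : ℕ → ℕ := fun k => dir (node k)
  have hpath : ∀ k, Preproof.pathOf b k = (node k).pos := by
    intro k
    induction k with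
    | zero => rfl
    | succ k ih =>
      rw [hnode, hpos, ← ih]
      simp [Preproof.pathOf, List.range_succ, b]
  have hbranch : P.IsBranch b := fun k => by rw [hpath, (node k).rule_eq]; rfl
  have hanti : Antitone fun k => (node k).size :=
    antitone_nat_of_succ_le fun k => by rw [hnode]; exact hle _
  -- An infinite branch would force the size to drop infinitely often.
  have hfin : ∀ m k, (node k).size ≠ m := by
    intro m
    induction m using Nat.strong_induction_on with
    | _ m ih =>
      intro k hk
      obtain ⟨l, hkl, r', hr', hmu⟩ := hP b hbranch k
      rw [hpath, (node l).rule_eq, Option.some_inj] at hr'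
      have h1 := hlt (node l) (hr' ▸ hmu)
      rw [← hnode] at h1
      have h2 : (node l).size ≤ (node k).size := hanti hkl
      exact ih _ (by omega) (l + 1) rfl
  exact hfin _ 0 rfl

end

/-- Theorem 4.2: if `μHKA ⊢∞ e → [f]` then `e ≤ f` (i.e. the
sequent `e → [f]`) is derivable by a wellfounded proof in `μHKA_ω`. -/
theorem muHKA_inf_to_muHKA_omega {α : Type} [Fintype α] [DecidableEq α] (e f : Exp α)
    (hce : e.Closed) (hcf : f.Closed) (hge : e.Guarded) (hgf : f.Guarded)
    (h : ProofInf (⟨[e], {[f]}⟩ : Sqt α)) :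
    DerivW (⟨[e], {[f]}⟩ : Sqt α) := by
  obtain ⟨P, hs, hP⟩ := h
  refine leftComplete_of_closed hce [] [] {[f]} fun w n p => ?_
  simpa using derivW_word_of_progressing hP hs (CParse.cons p .nil)

end CFPT
end
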